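/- Let p and q be prime integers with p ≠ q, k ≥ 0 an integer, and let Λ be a finite subgroup of (ℝ/ℤ)^{d+1} which is non-pyramidal and has δ-polynomial 1 + t^{k+1} + t^{2(k+1)} + ⋯ + t^{(pq−1)(k+1)}. Then one of the following holds, where in each case the stated generator is taken after a suitable permutation of the coordinates: (1) d = pq(k+1) − 1 and Λ is the cyclic subgroup generated by (1/(pq), …, 1/(pq)); (2) d = p(q+1)(k+1) − 1 and Λ is the cyclic subgroup generated by the element whose first p(k+1) coordinates equal 1/p and whose last pq(k+1) coordinates equal 1/q; (3) d = (p+1)q(k+1) − 1 and Λ is the cyclic subgroup generated by the element whose first q(k+1) coordinates equal 1/q and whose last pq(k+1) coordinates equal 1/p; (4) d = (pq + p − 1)(k+1) − 1 and Λ is the cyclic subgroup generated by the element whose first (pq−1)(k+1) coordinates equal 1/q and whose last p(k+1) coordinates equal 1/(pq); (5) d = (pq + q − 1)(k+1) − 1 and Λ is the cyclic subgroup generated by the element whose first (pq−1)(k+1) coordinates equal 1/p and whose last q(k+1) coordinates equal 1/(pq). -/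

import Mathlib

open scoped BigOperators

local instance : Fact ((0:ℝ) < 1) := ⟨one_pos⟩

noncomputable def fracR (x : AddCircle (1:ℝ)) : ℝ :=
  ((AddCircle.equivIco 1 0) x : ℝ)

noncomputable def ht {ι : Type*} [Fintype ι] (x : ι → AddCircle (1:ℝ)) : ℝ :=
  ∑ i, fracR (x i)

/-- `Λ` has δ-polynomial `1 + t^step + t^(2*step) + ⋯ + t^((v-1)*step)` :
the height map is a bijection from `Λ` onto `{j*step : 0 ≤ j ≤ v-1}`. -/
def HasDeltaPoly {ι : Type*} [Fintype ι] (v step : ℕ)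
    (Λ : Set (ι → AddCircle (1:ℝ))) : Prop :=
  Set.BijOn ht Λ {y : ℝ | ∃ j : ℕ, j < v ∧ y = (j : ℝ) * (step : ℝ)}

def NonPyramidal {ι : Type*} [Fintype ι] (Λ : Set (ι → AddCircle (1:ℝ))) : Prop :=
  ∀ i : ι, ∃ x ∈ Λ, x i ≠ 0

/-- `p * q` times the height of the `j`-th multiple of the vector having `a` coordinates `1/p`,
`b` coordinates `1/q` and `c` coordinates `1/(pq)`. -/
def scaledHeight (p q a b c j : ℕ) : ℕ :=
  a * q * (j % p) + b * p * (j % q) + c * (j % (p * q))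

lemma scaledHeight_swap (p q a b c j : ℕ) :
    scaledHeight q p b a c j = scaledHeight p q a b c j := by
  simp only [scaledHeight, Nat.mul_comm q p]
  ring

lemma Nat.sub_mod_add_mod {n N j : ℕ} (hn : 0 < n) (hN : n ∣ N) (hj : j ≤ N) (hnj : ¬ n ∣ j) :
    (N - j) % n + j % n = n := by
  have h0 : ¬ n ∣ N - j := fun h => hnj ((Nat.dvd_sub_iff_right hj hN).1 h)
  have h1 : ((N - j) % n + j % n) % n = 0 := by
    rw [← Nat.add_mod, Nat.sub_add_cancel hj]
    exact Nat.mod_eq_zero_of_dvd hN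
  have h2 := Nat.mod_lt (N - j) hn
  have h3 := Nat.mod_lt j hn
  have h4 : (N - j) % n ≠ 0 := fun h => h0 (Nat.dvd_of_mod_eq_zero h)
  obtain ⟨c, hc⟩ := Nat.dvd_of_mod_eq_zero h1
  have : c = 1 := by
    have hc2 : c < 2 := by
      by_contra hcon
      have : n * 2 ≤ n * c := Nat.mul_le_mul_left _ (by omega)
      omega
    have hc0 : c ≠ 0 := by rintro rfl; omega
    omega
  subst this
  omega

lemma scaledHeight_sub_add {p q a b c j : ℕ} (hp : 0 < p) (hq : 0 < q) (hj : j ≤ p * q)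
    (hpj : ¬ p ∣ j) (hqj : ¬ q ∣ j) :
    scaledHeight p q a b c (p * q - j) + scaledHeight p q a b c j = p * q * (a + b + c) := by
  have h1 := Nat.sub_mod_add_mod hp (dvd_mul_right p q) hj hpj
  have h2 := Nat.sub_mod_add_mod hq (dvd_mul_left q p) hj hqj
  have h3 := Nat.sub_mod_add_mod (Nat.mul_pos hp hq) (dvd_refl (p * q)) hj
    (fun h => hpj ((dvd_mul_right p q).trans h))
  unfold scaledHeight
  calc _ = a * q * ((p * q - j) % p + j % p) + b * p * ((p * q - j) % q + j % q)
        + c * ((p * q - j) % (p * q) + j % (p * q)) := by ring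
    _ = _ := by rw [h1, h2, h3]; ring

lemma scaledHeight_one {p q a b c : ℕ} (hp : 1 < p) (hq : 1 < q) :
    scaledHeight p q a b c 1 = a * q + b * p + c := by
  have : 1 < p * q := by nlinarith
  simp [scaledHeight, Nat.mod_eq_of_lt hp, Nat.mod_eq_of_lt hq, Nat.mod_eq_of_lt this]

lemma scaledHeight_mul_left {p q a b c i : ℕ} (hi : i < q) :
    scaledHeight p q a b c (p * i) = p * (b * (p * i % q) + c * i) := by
  rcases Nat.eq_zero_or_pos p with rfl | hp
  · simp [scaledHeight]
  have : p * i < p * q := Nat.mul_lt_mul_of_pos_left hi hp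
  simp only [scaledHeight, Nat.mul_mod_right, Nat.mod_eq_of_lt this]
  ring

lemma scaledHeight_le {p q a b c : ℕ} (hp : 1 < p) (hq : 1 < q) (j : ℕ) :
    scaledHeight p q a b c j ≤ scaledHeight p q a b c (p * q - 1) := by
  have hpq : 1 < p * q := by nlinarith
  have key : ∀ n, 1 < n → n ∣ p * q → j % n ≤ (p * q - 1) % n := fun n hn hd => by
    have h1 := Nat.sub_mod_add_mod (by omega) hd hpq.le (by simpa using hn.ne')
    rw [Nat.mod_eq_of_lt hn] at h1
    have := Nat.mod_lt j (by omega : 0 < n)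
    omega
  unfold scaledHeight
  have hp' := key p hp (dvd_mul_right p q)
  have hq' := key q hq (dvd_mul_left q p)
  have hpq' := key _ hpq dvd_rfl
  gcongr

lemma counts_of_height_mul_eq_one {p q a b c : ℕ} (hp : p.Prime) (hq : q.Prime) (hpq : p ≠ q)
    {h : ℕ → ℕ} (hF : ∀ j < p * q, scaledHeight p q a b c j = p * q * h j)
    (hinj : Set.InjOn h (Set.Iio (p * q))) (hmax : h (p * q - 1) = p * q - 1)
    {i : ℕ} (hi : i < q) (h1 : h (p * i) = 1) :
    (a = p * q - 1 ∧ b = 0 ∧ c = q) ∨ (a = p * q ∧ b = q ∧ c = 0) := by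
  have hp1 := hp.one_lt
  have hq1 := hq.one_lt
  have hpq1 : 1 < p * q := by nlinarith
  have hcop : ∀ j, 0 < j → j < q → 0 < p * j % q := fun j hj0 hj =>
    Nat.pos_of_ne_zero fun h0 => by
      rcases (hq.dvd_mul).1 (Nat.dvd_of_mod_eq_zero h0) with h | h
      · exact hpq ((Nat.prime_dvd_prime_iff_eq hq hp).1 h).symm
      · exact absurd (Nat.le_of_dvd hj0 h) (by omega)
  have hmul : ∀ j < q, b * (p * j % q) + c * j = q * h (p * j) := fun j hj => by
    have := hF (p * j) (Nat.mul_lt_mul_of_pos_left hj hp.pos)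
    rw [scaledHeight_mul_left hj, mul_assoc] at this
    exact Nat.eq_of_mul_eq_mul_left hp.pos this
  have h00 : h 0 = 0 := by
    have := hF 0 (by omega)
    simp only [scaledHeight, Nat.zero_mod, mul_zero, add_zero] at this
    have := (mul_eq_zero.1 this.symm)
    omega
  have hi0 : 0 < i := Nat.pos_of_ne_zero fun h0 => by simp [h0, h00] at h1
  have hx := hmul i hi
  rw [h1, mul_one] at hx
  have hr := hcop i hi0 hi
  have hle : b + c ≤ q := by nlinarith
  have hge : q ≤ b + c := by
    have hmaps : Set.MapsTo (fun j => h (p * j)) (Finset.Ico 1 q) (Finset.Ico 1 (b + c)) := by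
      intro j hj
      simp only [Finset.coe_Ico, Set.mem_Ico] at hj ⊢
      constructor
      · apply Nat.pos_of_ne_zero
        intro h0
        have h2 : p * j < p * q := Nat.mul_lt_mul_of_pos_left hj.2 hp.pos
        have := hinj (Set.mem_Iio.2 h2) (Set.mem_Iio.2 (by omega : 0 < p * q)) (h0.trans h00.symm)
        have := mul_eq_zero.1 this
        omega
      · have h2 := hmul j hj.2
        have h3 := Nat.mod_lt (p * j) hq.pos
        have hbc : 0 < b + c := by
          by_contra hcon
          have : b = 0 ∧ c = 0 := by omega
          simp [this] at hx
          omega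
        obtain ⟨hj1, hj2⟩ := hj
        obtain ⟨q', rfl⟩ : ∃ q', q = q' + 1 := ⟨q - 1, by omega⟩
        have h4 : b * (p * j % (q' + 1)) ≤ b * q' := Nat.mul_le_mul_left _ (by omega)
        have h5 : c * j ≤ c * q' := Nat.mul_le_mul_left _ (by omega)
        by_contra hcon
        have h6 : (q' + 1) * (b + c) ≤ (q' + 1) * h (p * j) :=
          Nat.mul_le_mul_left _ (by omega)
        nlinarith
    have hio : Set.InjOn (fun j => h (p * j)) (Finset.Ico 1 q) := by
      intro x hx y hy hxy
      simp only [Finset.coe_Ico, Set.mem_Ico] at hx hy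
      have := hinj (Set.mem_Iio.2 (Nat.mul_lt_mul_of_pos_left hx.2 hp.pos))
        (Set.mem_Iio.2 (Nat.mul_lt_mul_of_pos_left hy.2 hp.pos)) hxy
      exact Nat.eq_of_mul_eq_mul_left hp.pos this
    have := Finset.card_le_card_of_injOn _ hmaps hio
    simp only [Nat.card_Ico] at this
    omega
  have hbc : b + c = q := le_antisymm hle hge
  have e1 := hF 1 hpq1
  rw [scaledHeight_one hp1 hq1] at e1
  have e2 := scaledHeight_sub_add (a := a) (b := b) (c := c) hp.pos hq.pos hpq1.le
    (by simpa using hp1.ne') (by simpa using hq1.ne')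
  rw [hF _ (by omega), hF _ hpq1, ← mul_add, hmax] at e2
  replace e2 := Nat.eq_of_mul_eq_mul_left (by omega) e2
  have e3 : p * q + h 1 = a + q + 1 := by omega
  have key : (h 1 : ℤ) * q = q ^ 2 + b := by
    have hz : (0 : ℤ) < p - 1 := by have : (1 : ℤ) < p := by exact_mod_cast hp1
                                    linarith
    apply mul_right_cancel₀ hz.ne'
    zify at e1 e3 hbc
    linear_combination hbc - (q : ℤ) * e3 - e1
  rcases Nat.eq_zero_or_pos b with hb | hb
  · left
    subst hb
    have : h 1 = q := by
      have : h 1 * q = q * q := by zify; simpa [sq] using key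
      exact Nat.eq_of_mul_eq_mul_right hq.pos this
    omega
  · right
    have : q ∣ b := by
      have : (q : ℤ) ∣ b := ⟨h 1 - q, by linear_combination -key⟩
      exact_mod_cast this
    have hbq := Nat.le_of_dvd hb this
    have hb' : b = q := by omega
    have : h 1 = q + 1 := by
      have : h 1 * q = (q + 1) * q := by
        subst hb'
        zify; linear_combination key
      exact Nat.eq_of_mul_eq_mul_right hq.pos this
    omega

lemma counts_of_bijOn_scaledHeight {p q a b c : ℕ} (hp : p.Prime) (hq : q.Prime) (hpq : p ≠ q)
    {h : ℕ → ℕ} (hF : ∀ j < p * q, scaledHeight p q a b c j = p * q * h j)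
    (hbij : Set.BijOn h (Set.Iio (p * q)) (Set.Iio (p * q))) :
    (a = 0 ∧ b = 0 ∧ c = p * q) ∨ (a = p ∧ b = p * q ∧ c = 0) ∨
      (a = p * q ∧ b = q ∧ c = 0) ∨ (a = 0 ∧ b = p * q - 1 ∧ c = p) ∨
      (a = p * q - 1 ∧ b = 0 ∧ c = q) := by
  have hp1 := hp.one_lt
  have hq1 := hq.one_lt
  have hpq1 : 1 < p * q := by nlinarith
  have hmax : h (p * q - 1) = p * q - 1 := by
    obtain ⟨j, hj, hj'⟩ := hbij.surjOn (Set.mem_Iio.2 (by omega : p * q - 1 < p * q))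
    have h1 := scaledHeight_le (a := a) (b := b) (c := c) hp1 hq1 j
    rw [hF j hj, hF _ (by omega), hj'] at h1
    have h2 := Nat.le_of_mul_le_mul_left h1 (by omega)
    have h3 : h (p * q - 1) < p * q := hbij.mapsTo (Set.mem_Iio.2 (by omega))
    omega
  have h00 : h 0 = 0 := by
    have := hF 0 (by omega)
    simp only [scaledHeight, Nat.zero_mod, mul_zero, add_zero] at this
    have := (mul_eq_zero.1 this.symm)
    omega
  have h10 : h 1 ≠ 0 := fun h1 => by
    have := hbij.injOn (Set.mem_Iio.2 hpq1) (Set.mem_Iio.2 (by omega : 0 < p * q))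
      (h1.trans h00.symm)
    omega
  have e1 := hF 1 hpq1
  rw [scaledHeight_one hp1 hq1] at e1
  have e2 := scaledHeight_sub_add (a := a) (b := b) (c := c) hp.pos hq.pos hpq1.le
    (by simpa using hp1.ne') (by simpa using hq1.ne')
  rw [hF _ (by omega), hF _ hpq1, ← mul_add, hmax] at e2
  replace e2 := Nat.eq_of_mul_eq_mul_left (by omega) e2
  by_cases hm : h 1 = 1
  · left
    rw [hm, mul_one] at e1
    replace e2 : a + b + c = p * q := by omega
    have ha : a = 0 := by
      by_contra ha
      have := Nat.mul_lt_mul_of_pos_left hq1 (Nat.pos_of_ne_zero ha)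
      have := Nat.mul_le_mul_left b hp1.le
      omega
    have hb : b = 0 := by
      by_contra hb
      have := Nat.mul_lt_mul_of_pos_left hp1 (Nat.pos_of_ne_zero hb)
      have := Nat.mul_le_mul_left a hq1.le
      omega
    omega
  · obtain ⟨j, hj, hj1⟩ := hbij.surjOn (Set.mem_Iio.2 hpq1)
    rw [Set.mem_Iio] at hj
    by_cases hpj : p ∣ j
    · obtain ⟨i, rfl⟩ := hpj
      have := counts_of_height_mul_eq_one hp hq hpq hF hbij.injOn hmax
        (Nat.lt_of_mul_lt_mul_left hj) hj1
      tauto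
    by_cases hqj : q ∣ j
    · obtain ⟨i, rfl⟩ := hqj
      rw [mul_comm p q] at hj hmax hbij
      have := counts_of_height_mul_eq_one (a := b) (b := a) (c := c) hq hp hpq.symm
        (h := h) (fun j hj => by rw [scaledHeight_swap, hF j (by linarith), mul_comm p q])
        hbij.injOn hmax
        (Nat.lt_of_mul_lt_mul_left hj) hj1
      rw [mul_comm q p] at this
      tauto
    · have e3 := scaledHeight_sub_add (a := a) (b := b) (c := c) hp.pos hq.pos hj.le hpj hqj
      have hj0 : j ≠ 0 := by rintro rfl; simp at hpj
      rw [hF _ (by omega), hF _ hj, ← mul_add, hj1] at e3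
      replace e3 := Nat.eq_of_mul_eq_mul_left (by omega) e3
      have hlt : p * q - j < p * q := by omega
      have h3 := Set.mem_Iio.1 (hbij.mapsTo (Set.mem_Iio.2 hlt))
      exfalso
      omega

lemma dvd_left_of_dvd_scaledHeight {p q a b c s : ℕ} (hp : p.Prime) (hq : q.Prime) (hpq : p ≠ q)
    (hF : ∀ j < p * q, p * q * s ∣ scaledHeight p q a b c j) : s ∣ a := by
  have hp1 := hp.one_lt
  have hq1 := hq.one_lt
  have hpq1 : p < p * q := by nlinarith
  have hmod : (p - 1) % q + 1 = p % q := by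
    have h0 : p % q ≠ 0 := fun h0 =>
      hpq ((Nat.prime_dvd_prime_iff_eq hq hp).1 (Nat.dvd_of_mod_eq_zero h0)).symm
    have h1 := Nat.div_add_mod p q
    have h2 := Nat.mod_lt p hq.pos
    have : p - 1 = q * (p / q) + (p % q - 1) := by omega
    rw [this, Nat.mul_add_mod, Nat.mod_eq_of_lt (by omega)]
    omega
  have key : scaledHeight p q a b c (p - 1) + scaledHeight p q a b c 1
      = scaledHeight p q a b c p + p * q * a := by
    rw [scaledHeight_one hp1 hq1]
    simp only [scaledHeight, Nat.mod_self, ← hmod, Nat.mod_eq_of_lt hpq1,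
      Nat.mod_eq_of_lt (by omega : p - 1 < p), Nat.mod_eq_of_lt (by omega : p - 1 < p * q)]
    obtain ⟨r, rfl⟩ : ∃ r, p = r + 1 := ⟨p - 1, by omega⟩
    simp only [Nat.add_sub_cancel]
    ring
  have h1 : p * q * s ∣ p * q * a :=
    (Nat.dvd_add_right (hF p hpq1)).1 (key ▸ dvd_add (hF _ (by omega)) (hF _ (by omega)))
  exact Nat.dvd_of_mul_dvd_mul_left (by omega) h1

lemma counts_of_bijOn_scaledHeight_mul {p q a b c s : ℕ} (hp : p.Prime) (hq : q.Prime)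
    (hpq : p ≠ q) (hs : 0 < s) {h : ℕ → ℕ}
    (hF : ∀ j < p * q, scaledHeight p q a b c j = p * q * (h j * s))
    (hbij : Set.BijOn h (Set.Iio (p * q)) (Set.Iio (p * q))) :
    (a = 0 ∧ b = 0 ∧ c = p * q * s) ∨ (a = p * s ∧ b = p * q * s ∧ c = 0) ∨
      (a = p * q * s ∧ b = q * s ∧ c = 0) ∨ (a = 0 ∧ b = (p * q - 1) * s ∧ c = p * s) ∨
      (a = (p * q - 1) * s ∧ b = 0 ∧ c = q * s) := by
  have hp1 := hp.one_lt
  have hq1 := hq.one_lt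
  have hpq1 : 1 < p * q := by nlinarith
  have hdvd : ∀ j < p * q, p * q * s ∣ scaledHeight p q a b c j := fun j hj =>
    ⟨h j, by rw [hF j hj]; ring⟩
  have ha := dvd_left_of_dvd_scaledHeight hp hq hpq hdvd
  have hb : s ∣ b := dvd_left_of_dvd_scaledHeight (a := b) (b := a) (c := c) hq hp hpq.symm
    (fun j hj => by rw [scaledHeight_swap, mul_comm q p]; exact hdvd j (by linarith))
  have hc : s ∣ c := by
    have e2 := scaledHeight_sub_add (a := a) (b := b) (c := c) hp.pos hq.pos hpq1.le
      (by simpa using hp1.ne') (by simpa using hq1.ne')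
    have : p * q * s ∣ p * q * (a + b + c) :=
      e2 ▸ dvd_add (hdvd _ (by omega)) (hdvd _ hpq1)
    exact (Nat.dvd_add_right (dvd_add ha hb)).1 (Nat.dvd_of_mul_dvd_mul_left (by omega) this)
  obtain ⟨a, rfl⟩ := ha
  obtain ⟨b, rfl⟩ := hb
  obtain ⟨c, rfl⟩ := hc
  have := counts_of_bijOn_scaledHeight (a := a) (b := b) (c := c) hp hq hpq (h := h)
    (fun j hj => by
      apply Nat.eq_of_mul_eq_mul_left hs
      calc _ = scaledHeight p q (s * a) (s * b) (s * c) j := by simp only [scaledHeight]; ring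
        _ = _ := by rw [hF j hj]; ring) hbij
  rcases this with ⟨rfl, rfl, rfl⟩ | ⟨rfl, rfl, rfl⟩ | ⟨rfl, rfl, rfl⟩ | ⟨rfl, rfl, rfl⟩ |
    ⟨rfl, rfl, rfl⟩ <;> simp [mul_comm]

lemma fracR_coe (r : ℝ) : fracR (r : AddCircle (1:ℝ)) = Int.fract r := by
  exact (AddCircle.coe_equivIco_mk_apply (p := (1:ℝ)) r).trans (by simp)

lemma coe_fracR (x : AddCircle (1:ℝ)) : ((fracR x : ℝ) : AddCircle (1:ℝ)) = x :=
  AddCircle.coe_equivIco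

lemma fracR_lt_one (x : AddCircle (1:ℝ)) : fracR x < 1 := by
  rw [← coe_fracR x, fracR_coe]
  exact Int.fract_lt_one _

lemma fracR_add_fracR_neg (x : AddCircle (1:ℝ)) [Decidable (x = 0)] :
    fracR x + fracR (-x) = if x = 0 then 0 else 1 := by
  split_ifs with hx
  · subst hx
    rw [neg_zero, ← AddCircle.coe_zero, fracR_coe]
    simp
  · have h0 : fracR x ≠ 0 := fun h => hx (by rw [← coe_fracR x, h, AddCircle.coe_zero])
    have h1 : fracR x = Int.fract (fracR x) := by rw [← fracR_coe, coe_fracR]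
    have h2 : fracR (-x) = Int.fract (-fracR x) := by
      rw [← fracR_coe, AddCircle.coe_neg, coe_fracR]
    rw [h2, Int.fract_neg (h1 ▸ h0), ← h1]
    ring

lemma fracR_le_of_nsmul_eq_zero {x : AddCircle (1:ℝ)} {n : ℕ} (hn : 0 < n) (h : n • x = 0) :
    fracR x ≤ 1 - 1 / n := by
  have hn' : (0:ℝ) < n := by exact_mod_cast hn
  rw [← coe_fracR x, ← AddCircle.coe_nsmul, AddCircle.coe_eq_zero_iff] at h
  obtain ⟨z, hz⟩ := h
  simp only [zsmul_eq_mul, mul_one, nsmul_eq_mul] at hz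
  have h1 : (z:ℝ) < n := by rw [hz]; nlinarith [fracR_lt_one x]
  have h2 : z + 1 ≤ n := by exact_mod_cast h1
  have h3 : (z:ℝ) + 1 ≤ n := by exact_mod_cast h2
  have h4 : fracR x = z / n := by field_simp; linarith
  rw [h4, div_le_iff₀ hn', sub_mul, one_div_mul_cancel hn'.ne']
  linarith

lemma two_mul_sum_fracR {G : Type*} [AddCommGroup G] [Fintype G] (φ : G →+ AddCircle (1:ℝ)) :
    2 * ∑ x, fracR (φ x) = Nat.card G * (1 - 1 / Nat.card φ.range) := by
  classical
  have h1 : ∑ x, fracR (φ x) = ∑ x, fracR (-φ x) := by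
    simpa using (Fintype.sum_equiv (Equiv.neg G) (fun x => fracR (-φ x)) (fun x => fracR (φ x)) (by simp)).symm
  have h2 : 2 * ∑ x, fracR (φ x) = ∑ x, if φ x = 0 then (0:ℝ) else 1 := by
    rw [two_mul]
    nth_rewrite 2 [h1]
    rw [← Finset.sum_add_distrib]
    exact Finset.sum_congr rfl fun x _ => fracR_add_fracR_neg _
  have h3 : (∑ x, if φ x = 0 then (0:ℝ) else 1) = Nat.card G - Nat.card φ.ker := by
    have h4 : Nat.card φ.ker = ∑ x, if φ x = 0 then 1 else 0 := by
      rw [Finset.sum_boole, Nat.card_eq_fintype_card, ← Fintype.card_subtype]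
      simp [AddMonoidHom.mem_ker]
    rw [h4, Nat.card_eq_fintype_card, Fintype.card_eq_sum_ones]
    push_cast
    rw [← Finset.sum_sub_distrib]
    refine Finset.sum_congr rfl fun x _ => ?_
    split_ifs <;> simp
  have h5 : (Nat.card φ.ker : ℝ) * Nat.card φ.range = Nat.card G := by
    rw [← AddSubgroup.index_ker]
    exact_mod_cast φ.ker.card_mul_index
  have h6 : (Nat.card φ.range : ℝ) ≠ 0 := by
    exact_mod_cast Nat.card_pos.ne'
  rw [h2, h3, ← h5]
  field_simp

section Coordinates

variable {ι : Type*}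

/-- The projection of `Λ` to the `i`-th coordinate. -/
def coordHom (Λ : AddSubgroup (ι → AddCircle (1:ℝ))) (i : ι) : Λ →+ AddCircle (1:ℝ) :=
  (Pi.evalAddMonoidHom _ i).comp Λ.subtype

/-- The order of the group of `i`-th coordinates of the elements of `Λ`. -/
noncomputable def coordOrder (Λ : AddSubgroup (ι → AddCircle (1:ℝ))) (i : ι) : ℕ :=
  Nat.card (coordHom Λ i).range

/-- The vector with `i`-th coordinate `1 / coordOrder Λ i`. -/
noncomputable def coordGen (Λ : AddSubgroup (ι → AddCircle (1:ℝ))) (i : ι) : AddCircle (1:ℝ) :=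
  ((1 / (coordOrder Λ i : ℝ) : ℝ) : AddCircle (1:ℝ))

variable {Λ : AddSubgroup (ι → AddCircle (1:ℝ))}

lemma coordOrder_pos [Finite Λ] (i : ι) : 0 < coordOrder Λ i :=
  have : Finite (coordHom Λ i).range := Set.finite_range (coordHom Λ i)
  Nat.card_pos

lemma coordOrder_dvd_card (i : ι) : coordOrder Λ i ∣ Nat.card Λ :=
  AddSubgroup.card_range_dvd (coordHom Λ i)

lemma coordOrder_nsmul {x : ι → AddCircle (1:ℝ)} (hx : x ∈ Λ) (i : ι) :
    coordOrder Λ i • x i = 0 := by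
  have h : (⟨x i, ⟨⟨x, hx⟩, rfl⟩⟩ : (coordHom Λ i).range).1 = x i := rfl
  rw [← h, coordOrder, ← AddSubgroup.coe_nsmul, card_nsmul_eq_zero', ZeroMemClass.coe_zero]

lemma coordOrder_ne_one {i : ι} (h : ∃ x ∈ (Λ : Set (ι → AddCircle (1:ℝ))), x i ≠ 0) :
    coordOrder Λ i ≠ 1 := by
  obtain ⟨x, hx, hxi⟩ := h
  intro h1
  have := coordOrder_nsmul hx i
  rw [h1, one_nsmul] at this
  exact hxi this

lemma nsmul_eq_zero_of_nsmul_coordGen_eq_zero [Finite Λ] {m : ℕ} (hm : m • coordGen Λ = 0)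
    {x : ι → AddCircle (1:ℝ)} (hx : x ∈ Λ) : m • x = 0 := by
  funext i
  have h1 : m • coordGen Λ i = 0 := congrFun hm i
  have hn : (0:ℝ) < coordOrder Λ i := by exact_mod_cast coordOrder_pos i
  rw [coordGen, ← AddCircle.coe_nsmul, AddCircle.coe_eq_zero_iff] at h1
  obtain ⟨z, hz⟩ := h1
  simp only [zsmul_eq_mul, mul_one, nsmul_eq_mul] at hz
  field_simp at hz
  have h2 : coordOrder Λ i ∣ m := by
    have : (coordOrder Λ i : ℤ) ∣ m := ⟨z, by rw [mul_comm]; exact_mod_cast hz.symm⟩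
    exact_mod_cast this
  obtain ⟨c, rfl⟩ := h2
  rw [Pi.smul_apply, mul_comm, mul_nsmul', coordOrder_nsmul hx, smul_zero, Pi.zero_apply]

lemma eq_zmultiples_coordGen [Finite Λ] {p q : ℕ} (hp : p.Prime) (hq : q.Prime) (hpq : p ≠ q)
    (hcard : Nat.card Λ = p * q) (hg : coordGen Λ ∈ Λ) :
    Λ = AddSubgroup.zmultiples (coordGen Λ) ∧ addOrderOf (coordGen Λ) = p * q := by
  have hdvd : ∀ r, r.Prime → r ∣ Nat.card Λ → r ∣ addOrderOf (coordGen Λ) := fun r hr hrc => by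
    have := Fact.mk hr
    obtain ⟨x, hx⟩ := exists_prime_addOrderOf_dvd_card' r hrc
    rw [← hx, ← AddSubgroup.addOrderOf_coe]
    exact addOrderOf_dvd_of_nsmul_eq_zero
      (nsmul_eq_zero_of_nsmul_coordGen_eq_zero (addOrderOf_nsmul_eq_zero _) x.2)
  have h1 : p * q ∣ addOrderOf (coordGen Λ) :=
    ((Nat.coprime_primes hp hq).2 hpq).mul_dvd_of_dvd_of_dvd
      (hdvd p hp (hcard ▸ dvd_mul_right p q)) (hdvd q hq (hcard ▸ dvd_mul_left q p))
  have h2 : addOrderOf (coordGen Λ) ∣ p * q :=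
    hcard ▸ addOrderOf_dvd_of_nsmul_eq_zero (by
      have h3 : Nat.card Λ • (⟨_, hg⟩ : Λ) = 0 := card_nsmul_eq_zero'
      exact congrArg Subtype.val h3)
  have h3 := Nat.dvd_antisymm h2 h1
  refine ⟨(AddSubgroup.eq_of_le_of_card_ge (AddSubgroup.zmultiples_le_of_mem hg) ?_).symm, h3⟩
  rw [Nat.card_zmultiples, h3, hcard]

variable [Fintype ι] {v s : ℕ}

lemma two_mul_sum_ht [Fintype Λ] :
    2 * ∑ x : Λ, ht (x : ι → AddCircle (1:ℝ)) =
      Nat.card Λ * ∑ i, (1 - 1 / (coordOrder Λ i : ℝ)) := by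
  simp only [ht]
  rw [Finset.sum_comm, Finset.mul_sum, Finset.mul_sum]
  exact Finset.sum_congr rfl fun i _ => two_mul_sum_fracR (coordHom Λ i)

lemma HasDeltaPoly.card_eq (hs : 0 < s)
    (hΛ : HasDeltaPoly v s (Λ : Set (ι → AddCircle (1:ℝ)))) : Nat.card Λ = v := by
  have hs' : (s:ℝ) ≠ 0 := by exact_mod_cast hs.ne'
  have h1 : {y : ℝ | ∃ j : ℕ, j < v ∧ y = (j : ℝ) * (s : ℝ)} =
      (fun j : ℕ => (j : ℝ) * s) '' Set.Iio v := by
    ext y; simp [eq_comm]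
  have h2 : Set.BijOn ht (Λ : Set (ι → AddCircle (1:ℝ))) _ := hΛ
  rw [h1] at h2
  have h3 := h2.injOn.ncard_image
  rw [h2.image_eq, Set.ncard_image_of_injective _ (fun a b hab => by simpa [hs'] using hab)] at h3
  rw [← SetLike.coe_sort_coe, Nat.card_coe_set_eq, ← h3, ← Finset.coe_Iio, Set.ncard_coe_finset,
    Nat.card_Iio]

lemma HasDeltaPoly.two_mul_sum_ht_eq [Fintype Λ] (hs : 0 < s)
    (hΛ : HasDeltaPoly v s (Λ : Set (ι → AddCircle (1:ℝ)))) :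
    2 * ∑ x : Λ, ht (x : ι → AddCircle (1:ℝ)) = v * ((v - 1) * s) := by
  have hs' : (s:ℝ) ≠ 0 := by exact_mod_cast hs.ne'
  have hsum : ∑ x : Λ, ht (x : ι → AddCircle (1:ℝ)) = ∑ j ∈ Finset.range v, (j : ℝ) * s := by
    symm
    have hex : ∀ j ∈ Finset.range v, ∃ x : Λ, ht (x : ι → AddCircle (1:ℝ)) = j * s :=
      fun j hj => by
        obtain ⟨x, hx, hxj⟩ := hΛ.surjOn ⟨j, Finset.mem_range.1 hj, rfl⟩
        exact ⟨⟨x, hx⟩, hxj⟩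
    choose f hf using hex
    refine Finset.sum_bij f (fun _ _ => Finset.mem_univ _) ?_ ?_ fun j hj => (hf j hj).symm
    · intro j hj j' hj' h
      have := hf j hj
      rw [h, hf j' hj'] at this
      simpa [hs'] using this.symm
    · intro x _
      obtain ⟨j, hj, hxj⟩ := hΛ.mapsTo x.2
      refine ⟨j, Finset.mem_range.2 hj, Subtype.ext (hΛ.injOn (f _ _).2 x.2 ?_)⟩
      rw [hf, hxj]
  have hgauss : (∑ j ∈ Finset.range v, (j : ℝ)) * 2 = v * (v - 1) := by
    clear hΛ hsum
    induction v with
    | zero => simp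
    | succ n ih => rw [Finset.sum_range_succ, add_mul, ih]; push_cast; ring
  rw [hsum, ← Finset.sum_mul]
  linear_combination s * hgauss

/-- The element of maximal height has all coordinates maximal, so its negative is `coordGen Λ`. -/
lemma HasDeltaPoly.coordGen_mem [Finite Λ] (hs : 0 < s)
    (hΛ : HasDeltaPoly v s (Λ : Set (ι → AddCircle (1:ℝ)))) : coordGen Λ ∈ Λ := by
  have := Fintype.ofFinite Λ
  have hcard := hΛ.card_eq hs
  have hv : 0 < v := hcard ▸ Nat.card_pos
  have h1 := hΛ.two_mul_sum_ht_eq hs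
  rw [two_mul_sum_ht, hcard] at h1
  have h2 := mul_left_cancel₀ (by exact_mod_cast hv.ne') h1
  obtain ⟨x, hx, hxv⟩ := hΛ.surjOn ⟨v - 1, by omega, rfl⟩
  rw [Nat.cast_sub hv, Nat.cast_one, ← h2, ht] at hxv
  have h3 := (Finset.sum_eq_sum_iff_of_le fun i _ =>
    fracR_le_of_nsmul_eq_zero (coordOrder_pos i) (coordOrder_nsmul hx i)).1 hxv
  convert Λ.neg_mem hx using 1
  funext i
  rw [Pi.neg_apply, ← coe_fracR (x i), h3 i (Finset.mem_univ i), AddCircle.coe_sub,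
    AddCircle.coe_period, zero_sub, neg_neg, coordGen]

lemma ht_nsmul_coordGen [Finite Λ] (j : ℕ) :
    ht (j • coordGen Λ) = ∑ i, ((j % coordOrder Λ i : ℕ) : ℝ) / coordOrder Λ i := by
  refine Finset.sum_congr rfl fun i _ => ?_
  rw [Pi.smul_apply, coordGen, ← AddCircle.coe_nsmul, fracR_coe, nsmul_eq_mul, mul_one_div,
    Int.fract_div_natCast_eq_div_natCast_mod]

end Coordinates

lemma exists_perm_lt_card_iff {m : ℕ} (S : Finset (Fin m)) :
    ∃ σ : Equiv.Perm (Fin m), ∀ i, (σ i : ℕ) < S.card ↔ i ∈ S := by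
  have hle : S.card ≤ m := by simpa using S.card_le_univ
  have hc : Fintype.card {x // x ∈ S} = Fintype.card {x : Fin m // (x : ℕ) < S.card} := by
    rw [Fintype.card_coe, Fintype.card_subtype, Fin.card_filter_val_lt, min_eq_right hle]
  let e := Fintype.equivOfCardEq hc
  refine ⟨e.extendSubtype, fun i => ⟨fun h => ?_, fun h => e.extendSubtype_mem i h⟩⟩
  by_contra hi
  exact e.extendSubtype_not_mem i hi h

lemma exists_perm_eq_ite {m α β : ℕ} {n : Fin m → ℕ} (h : ∀ i, n i = α ∨ n i = β) :
    ∃ σ : Equiv.Perm (Fin m),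
      ∀ i, n i = if (σ i : ℕ) < (Finset.univ.filter (n · = α)).card then α else β := by
  obtain ⟨σ, hσ⟩ := exists_perm_lt_card_iff (Finset.univ.filter (n · = α))
  refine ⟨σ, fun i => ?_⟩
  simp only [hσ, Finset.mem_filter, Finset.mem_univ, true_and]
  split_ifs with hi
  · exact hi
  · exact (h i).resolve_left hi

lemma sum_comp_of_three_values {ι M : Type*} [Fintype ι] [AddCommMonoid M] {n : ι → ℕ}
    {α β γ : ℕ} (hαβ : α ≠ β) (hαγ : α ≠ γ) (hβγ : β ≠ γ)
    (hn : ∀ i, n i = α ∨ n i = β ∨ n i = γ) (f : ℕ → M) :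
    ∑ i, f (n i) = (Finset.univ.filter (n · = α)).card • f α +
      (Finset.univ.filter (n · = β)).card • f β +
      (Finset.univ.filter (n · = γ)).card • f γ := by
  simp only [← Finset.sum_const, Finset.sum_filter, ← Finset.sum_add_distrib]
  refine Finset.sum_congr rfl fun i _ => ?_
  rcases hn i with h | h | h <;> simp [h, hαβ, hαγ, hβγ, hαβ.symm, hαγ.symm, hβγ.symm]

lemma coordOrder_eq_or {ι : Type*} [Fintype ι] {Λ : AddSubgroup (ι → AddCircle (1:ℝ))} {p q : ℕ}
    (hp : p.Prime) (hq : q.Prime) (hcard : Nat.card Λ = p * q)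
    (hnp : NonPyramidal (Λ : Set (ι → AddCircle (1:ℝ)))) (i : ι) :
    coordOrder Λ i = p ∨ coordOrder Λ i = q ∨ coordOrder Λ i = p * q := by
  have h1 := coordOrder_ne_one (hnp i)
  have h2 := coordOrder_dvd_card (Λ := Λ) i
  rw [hcard, Nat.dvd_mul] at h2
  obtain ⟨x, y, hx, hy, hxy⟩ := h2
  rw [← hxy] at h1 ⊢
  rcases (Nat.dvd_prime hp).1 hx with rfl | rfl <;>
    rcases (Nat.dvd_prime hq).1 hy with rfl | rfl <;> simp_all

lemma exists_bijOn_scaledHeight {ι : Type*} [Fintype ι] {Λ : AddSubgroup (ι → AddCircle (1:ℝ))}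
    [Finite Λ] {p q s : ℕ} (hp : p.Prime) (hq : q.Prime) (hpq : p ≠ q) (hs : 0 < s)
    (hn : ∀ i, coordOrder Λ i = p ∨ coordOrder Λ i = q ∨ coordOrder Λ i = p * q)
    (hΛ : HasDeltaPoly (p * q) s (Λ : Set (ι → AddCircle (1:ℝ)))) :
    ∃ h : ℕ → ℕ, Set.BijOn h (Set.Iio (p * q)) (Set.Iio (p * q)) ∧ ∀ j < p * q,
      scaledHeight p q (Finset.univ.filter (coordOrder Λ · = p)).card
        (Finset.univ.filter (coordOrder Λ · = q)).card
        (Finset.univ.filter (coordOrder Λ · = p * q)).card j = p * q * (h j * s) := by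
  have hg := hΛ.coordGen_mem hs
  obtain ⟨-, hord⟩ := eq_zmultiples_coordGen hp hq hpq (hΛ.card_eq hs) hg
  have hex : ∀ j : ℕ, ∃ t : ℕ, t < p * q ∧ ht (j • coordGen Λ) = t * s := fun j =>
    hΛ.mapsTo (Λ.nsmul_mem hg j)
  choose h hlt hh using hex
  have hmaps : Set.MapsTo h (Set.Iio (p * q)) (Set.Iio (p * q)) := fun j _ => hlt j
  have hinj : Set.InjOn h (Set.Iio (p * q)) := fun j hj j' hj' hjj' => by
    have h1 : j • coordGen Λ = j' • coordGen Λ :=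
      hΛ.injOn (Λ.nsmul_mem hg j) (Λ.nsmul_mem hg j') (by rw [hh, hh, hjj'])
    rw [← hord] at hj hj'
    exact nsmul_injOn_Iio_addOrderOf hj hj' h1
  have hsurj : Set.SurjOn h (Set.Iio (p * q)) (Set.Iio (p * q)) := by
    rw [← Finset.coe_Iio] at hmaps hinj ⊢
    exact Finset.surjOn_of_injOn_of_card_le h hmaps hinj le_rfl
  refine ⟨h, ⟨hmaps, hinj, hsurj⟩, fun j _ => ?_⟩
  have hp0 : (p:ℝ) ≠ 0 := by exact_mod_cast hp.ne_zero
  have hq0 : (q:ℝ) ≠ 0 := by exact_mod_cast hq.ne_zero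
  have hppq : p ≠ p * q := fun h => hq.ne_one (by simpa [hp.ne_zero] using h.symm)
  have hqpq : q ≠ p * q := fun h => hp.ne_one (by simpa [hq.ne_zero] using h.symm)
  have h1 := hh j
  rw [ht_nsmul_coordGen, sum_comp_of_three_values hpq hppq hqpq hn
    (fun n => ((j % n : ℕ) : ℝ) / n)] at h1
  simp only [nsmul_eq_mul] at h1
  rw [scaledHeight]
  have h2 := congrArg (fun y : ℝ => p * q * y) h1
  push_cast at h2
  field_simp at h2
  norm_cast at h2
  linarith

theorem stmt_8 (p q k d : ℕ) (hp : p.Prime) (hq : q.Prime) (hpq : p ≠ q)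
    (Λ : AddSubgroup (Fin (d+1) → AddCircle (1:ℝ)))
    (hfin : (Λ : Set (Fin (d+1) → AddCircle (1:ℝ))).Finite)
    (hnp : NonPyramidal (Λ : Set (Fin (d+1) → AddCircle (1:ℝ))))
    (hΛ : HasDeltaPoly (p*q) (k+1) (Λ : Set (Fin (d+1) → AddCircle (1:ℝ)))) :
    (d = p*q*(k+1) - 1 ∧
      Λ = AddSubgroup.zmultiples
        (fun _ : Fin (d+1) => ((1 / ((p:ℝ)*(q:ℝ)) : ℝ) : AddCircle (1:ℝ)))) ∨
    (d = p*(q+1)*(k+1) - 1 ∧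
      ∃ σ : Equiv.Perm (Fin (d+1)),
        Λ = AddSubgroup.zmultiples
          (fun i : Fin (d+1) =>
            if ((σ i : ℕ)) < p*(k+1)
            then ((1 / (p:ℝ) : ℝ) : AddCircle (1:ℝ))
            else ((1 / (q:ℝ) : ℝ) : AddCircle (1:ℝ)))) ∨
    (d = (p+1)*q*(k+1) - 1 ∧
      ∃ σ : Equiv.Perm (Fin (d+1)),
        Λ = AddSubgroup.zmultiples
          (fun i : Fin (d+1) =>
            if ((σ i : ℕ)) < q*(k+1)
            then ((1 / (q:ℝ) : ℝ) : AddCircle (1:ℝ))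
            else ((1 / (p:ℝ) : ℝ) : AddCircle (1:ℝ)))) ∨
    (d = (p*q + p - 1)*(k+1) - 1 ∧
      ∃ σ : Equiv.Perm (Fin (d+1)),
        Λ = AddSubgroup.zmultiples
          (fun i : Fin (d+1) =>
            if ((σ i : ℕ)) < (p*q - 1)*(k+1)
            then ((1 / (q:ℝ) : ℝ) : AddCircle (1:ℝ))
            else ((1 / ((p:ℝ)*(q:ℝ)) : ℝ) : AddCircle (1:ℝ)))) ∨
    (d = (p*q + q - 1)*(k+1) - 1 ∧
      ∃ σ : Equiv.Perm (Fin (d+1)),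
        Λ = AddSubgroup.zmultiples
          (fun i : Fin (d+1) =>
            if ((σ i : ℕ)) < (p*q - 1)*(k+1)
            then ((1 / (p:ℝ) : ℝ) : AddCircle (1:ℝ))
            else ((1 / ((p:ℝ)*(q:ℝ)) : ℝ) : AddCircle (1:ℝ)))) := by
  have : Finite Λ := hfin
  have hs : 0 < k + 1 := k.succ_pos
  have hcard := hΛ.card_eq hs
  have hn := coordOrder_eq_or hp hq hcard hnp
  obtain ⟨hgen, -⟩ := eq_zmultiples_coordGen hp hq hpq hcard (hΛ.coordGen_mem hs)
  obtain ⟨h, hbij, hF⟩ := exists_bijOn_scaledHeight hp hq hpq hs hn hΛ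
  have hppq : p ≠ p * q := fun h => hq.ne_one (by simpa [hp.ne_zero] using h.symm)
  have hqpq : q ≠ p * q := fun h => hp.ne_one (by simpa [hq.ne_zero] using h.symm)
  have hd := sum_comp_of_three_values hpq hppq hqpq hn (fun _ => 1)
  simp only [Finset.sum_const, Finset.card_univ, Fintype.card_fin, smul_eq_mul, mul_one] at hd
  have hne : ∀ {m}, (Finset.univ.filter (coordOrder Λ · = m)).card = 0 →
      ∀ i, coordOrder Λ i ≠ m := fun h i hi => by
    rw [Finset.card_eq_zero, Finset.filter_eq_empty_iff] at h
    exact h (Finset.mem_univ i) hi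
  have hperm : ∀ {m₁ m₂ : ℕ}, (∀ i, coordOrder Λ i = m₁ ∨ coordOrder Λ i = m₂) →
      ∃ σ : Equiv.Perm (Fin (d+1)), Λ = AddSubgroup.zmultiples (fun i : Fin (d+1) =>
        if (σ i : ℕ) < (Finset.univ.filter (coordOrder Λ · = m₁)).card
        then ((1 / (m₁:ℝ) : ℝ) : AddCircle (1:ℝ))
        else ((1 / (m₂:ℝ) : ℝ) : AddCircle (1:ℝ))) := fun hm => by
    obtain ⟨σ, hσ⟩ := exists_perm_eq_ite hm
    refine ⟨σ, hgen.trans (congrArg _ (funext fun i => ?_))⟩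
    rw [coordGen, hσ i]
    split_ifs <;> rfl
  rcases counts_of_bijOn_scaledHeight_mul hp hq hpq hs hF hbij with
    ⟨ha, hb, hc⟩ | ⟨ha, hb, hc⟩ | ⟨ha, hb, hc⟩ | ⟨ha, hb, hc⟩ | ⟨ha, hb, hc⟩
  · left
    refine ⟨by omega, hgen.trans (congrArg _ (funext fun i => ?_))⟩
    rw [coordGen, ((hn i).resolve_left (hne ha i)).resolve_left (hne hb i), Nat.cast_mul]
  · right; left
    obtain ⟨σ, hσ⟩ := hperm (m₁ := p) (m₂ := q) fun i => by
      have := hn i; have := hne hc i; tauto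
    rw [ha] at hσ
    refine ⟨?_, σ, hσ⟩
    rw [ha, hb, hc] at hd
    refine Nat.eq_sub_of_add_eq (hd.trans ?_)
    ring
  · right; right; left
    obtain ⟨σ, hσ⟩ := hperm (m₁ := q) (m₂ := p) fun i => by
      have := hn i; have := hne hc i; tauto
    rw [hb] at hσ
    refine ⟨?_, σ, hσ⟩
    rw [ha, hb, hc] at hd
    refine Nat.eq_sub_of_add_eq (hd.trans ?_)
    ring
  · right; right; right; left
    obtain ⟨σ, hσ⟩ := hperm (m₁ := q) (m₂ := p * q) fun i => by
      have := hn i; have := hne ha i; tauto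
    rw [hb, Nat.cast_mul] at hσ
    refine ⟨?_, σ, hσ⟩
    rw [ha, hb, hc] at hd
    have : p * q + p - 1 = (p * q - 1) + p := by have := Nat.mul_pos hp.pos hq.pos; omega
    rw [this, add_mul]
    omega
  · right; right; right; right
    obtain ⟨σ, hσ⟩ := hperm (m₁ := p) (m₂ := p * q) fun i => by
      have := hn i; have := hne hb i; tauto
    rw [ha, Nat.cast_mul] at hσ
    refine ⟨?_, σ, hσ⟩
    rw [ha, hb, hc] at hd
    have : p * q + q - 1 = (p * q - 1) + q := by have := Nat.mul_pos hp.pos hq.pos; omega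
    rw [this, add_mul]
    omega
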